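/- arXiv:2512.02286 — 3 statements merged into one kernel-verified Lean document; each statement's English description precedes it below -/
import Mathlib

section
/- Stembridge's Pfaffian identity (even case): for an even number m = 2n of variables x_1,...,x_{2n} in a field with x_i x_j ≠ 1 for all i < j, one has ∏_{1 ≤ i < j ≤ 2n} (x_i - x_j)/(1 - x_i x_j) = Pf[S(x_i,x_j)]_{1≤i,j≤2n}, where S(x,y) = (x - y)/(1 - xy). -/
/-- Pfaffian of a `2n × 2n` matrix, defined by
`Pf A = (1/(2^n n!)) ∑_{σ ∈ S_{2n}} sgn(σ) ∏_{i=1}^n a_{σ(2i-1) σ(2i)}`. -/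
noncomputable def pf {K : Type*} [Field K] (n : ℕ)
    (A : Matrix (Fin (2 * n)) (Fin (2 * n)) K) : K :=
  (∑ σ : Equiv.Perm (Fin (2 * n)), ((Equiv.Perm.sign σ : ℤ) : K) *
      ∏ i : Fin n,
        A (σ ⟨2 * i.1, by have := i.2; omega⟩) (σ ⟨2 * i.1 + 1, by have := i.2; omega⟩)) /
    ((2 : K) ^ n * (n.factorial : K))

open Polynomial in
lemma key1 {K ι : Type*} [Field K] [CharZero K] [DecidableEq ι] (s : Finset ι) (x : ι → K)
    (hs : Odd s.card) (hinj : Set.InjOn x s) :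
    (∑ b ∈ s, C (∏ i ∈ s.erase b, (1 - x b * x i) / (x b - x i)) *
        ((X ^ 2 - 1) * ∏ i ∈ s.erase b, (X - C (x i)))) 
      = X * (∏ i ∈ s, (X - C (x i))) - ∏ i ∈ s, (1 - X * C (x i)) := by
  have hne : ∀ b ∈ s, ∀ i ∈ s.erase b, x b - x i ≠ 0 := by
    intro b hb i hi h
    rw [Finset.mem_erase] at hi
    exact hi.1 (hinj hi.2 hb (sub_eq_zero.1 h).symm)
  have hF : (∏ i ∈ s, (X - C (x i))).natDegree = s.card := natDegree_finsetProd_X_sub_C_eq_card s x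
  have hG : (∏ i ∈ s, (1 - X * C (x i))).natDegree ≤ s.card := by
    refine (natDegree_prod_le _ _).trans ?_
    refine (Finset.sum_le_card_nsmul _ _ 1 ?_).trans (by simp)
    intro i _
    compute_degree
  set P : K[X] := X * (∏ i ∈ s, (X - C (x i))) - ∏ i ∈ s, (1 - X * C (x i)) with hP
  have hPdeg : P.natDegree ≤ s.card + 1 := by
    refine (natDegree_sub_le _ _).trans (max_le ?_ (by omega))
    refine natDegree_mul_le.trans ?_
    rw [hF, natDegree_X]; omega
  have h1 : P.eval 1 = 0 := by simp [hP, eval_prod]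
  have h2 : P.eval (-1) = 0 := by
    have : ∏ i ∈ s, (-1 - x i) = - ∏ i ∈ s, (1 + x i) := by
      have e : ∏ i ∈ s, (-1 - x i) = ∏ i ∈ s, (-1) * (1 + x i) :=
        Finset.prod_congr rfl fun _ _ => by ring
      rw [e, Finset.prod_mul_distrib, Finset.prod_const, hs.neg_one_pow]; ring
    simp [hP, eval_prod, this]
  obtain ⟨q, hq⟩ : (X ^ 2 - 1 : K[X]) ∣ P := by
    have e : (X ^ 2 - 1 : K[X]) = (X - C 1) * (X - C (-1)) := by simp; ring
    rw [e]
    refine IsCoprime.mul_dvd ?_ (dvd_iff_isRoot.2 h1) (dvd_iff_isRoot.2 h2)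
    exact isCoprime_X_sub_C_of_isUnit_sub (by norm_num)
  have hmon : (X ^ 2 - 1 : K[X]).Monic := by monicity!
  have hd2 : (X ^ 2 - 1 : K[X]).natDegree = 2 := by compute_degree!
  have hqdeg : q.degree < s.card := by
    by_cases h0 : q = 0
    · simp [h0]
    · rw [degree_eq_natDegree h0]
      rw [hq, hmon.natDegree_mul' h0, hd2] at hPdeg
      exact_mod_cast (by omega : q.natDegree < s.card)
  rw [hq]
  have : (∑ b ∈ s, C (∏ i ∈ s.erase b, (1 - x b * x i) / (x b - x i)) *
        (∏ i ∈ s.erase b, (X - C (x i)))) = q := by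
    refine eq_of_degrees_lt_of_eval_index_eq s hinj ?_ hqdeg ?_
    · refine (degree_sum_le _ _).trans_lt ?_
      rw [Finset.sup_lt_iff (by exact WithBot.bot_lt_coe _)]
      intro b hb
      refine (degree_mul_le _ _).trans_lt ((add_le_add degree_C_le le_rfl).trans_lt ?_)
      rw [zero_add]
      rw [degree_eq_natDegree (monic_prod_X_sub_C _ _).ne_zero,
        natDegree_finsetProd_X_sub_C_eq_card, Finset.card_erase_of_mem hb]
      exact_mod_cast Nat.sub_lt hs.pos one_pos
    · intro k hk
      have hz : ∀ b ∈ s, b ≠ k → eval (x k) (C (∏ i ∈ s.erase b, (1 - x b * x i) / (x b - x i)) *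
        (∏ i ∈ s.erase b, (X - C (x i)))) = 0 := by
        intro b hb hbk
        have : ∏ i ∈ s.erase b, eval (x k) (X - C (x i)) = 0 :=
          Finset.prod_eq_zero (i := k) (by simp [hk, hbk.symm]) (by simp)
        rw [eval_mul, eval_prod, this, mul_zero]
      rw [eval_finsetSum, Finset.sum_eq_single_of_mem k hk hz, eval_mul, eval_C, eval_prod]
      simp only [eval_sub, eval_X, eval_C]
      rw [← Finset.prod_mul_distrib, 
        Finset.prod_congr rfl (fun i hi => div_mul_cancel₀ _ (hne k hk i hi))]
      by_cases hk2 : x k ^ 2 = 1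
      · have hc : (X + C (x k)) * q = X * (∏ i ∈ s.erase k, (X - C (x i)))
            + C (x k) * ∏ i ∈ s.erase k, (1 - X * C (x i)) := by
          apply mul_left_cancel₀ (X_sub_C_ne_zero (x k))
          have hk3 : (C (x k) : K[X]) * C (x k) = 1 := by
            rw [← C_mul, ← sq, hk2, C_1]
          have e1 : (X - C (x k)) * ((X + C (x k)) * q) = P := by
            rw [hq]; linear_combination (-q) * hk3
          rw [e1, hP, ← Finset.mul_prod_erase s _ hk, ← Finset.mul_prod_erase s _ hk]
          linear_combination (∏ i ∈ s.erase k, (1 - X * C (x i))) * hk3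
        have hc' := congrArg (eval (x k)) hc
        simp only [eval_mul, eval_add, eval_X, eval_C, eval_prod, eval_sub, eval_one] at hc'
        have e2 : ∏ i ∈ s.erase k, (x k - x i) = ∏ i ∈ s.erase k, (1 - x k * x i) := by
          have : ∏ i ∈ s.erase k, (x k - x i) = ∏ i ∈ s.erase k, x k * (1 - x k * x i) :=
            Finset.prod_congr rfl fun i _ => by linear_combination (x i) * hk2
          rw [this, Finset.prod_mul_distrib, Finset.prod_const, Finset.card_erase_of_mem hk]
          obtain ⟨r, hr⟩ := hs
          rw [hr, Nat.add_sub_cancel, pow_mul, hk2, one_pow, one_mul]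
        have hk0 : x k ≠ 0 := by
          intro h; rw [h] at hk2; norm_num at hk2
        rw [e2] at hc'
        have h2k : (2 * x k) ≠ 0 := mul_ne_zero two_ne_zero hk0
        apply mul_left_cancel₀ h2k
        linear_combination -hc'
      · have hc' := congrArg (eval (x k)) hq
        rw [hP, ← Finset.mul_prod_erase s _ hk, ← Finset.mul_prod_erase s _ hk] at hc'
        simp only [eval_mul, eval_pow, eval_X, eval_C, eval_prod, eval_sub, eval_one] at hc'
        apply mul_left_cancel₀ (sub_ne_zero.2 hk2)
        linear_combination hc'
  rw [← this, Finset.mul_sum]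
  exact Finset.sum_congr rfl fun _ _ => by ring

open Polynomial in
lemma key2 {K ι : Type*} [Field K] [CharZero K] [DecidableEq ι] (s : Finset ι) (x : ι → K)
    (hs : Odd s.card) (hinj : Set.InjOn x s) :
    ∑ b ∈ s, (∏ i ∈ s.erase b, (1 - x b * x i) / (x b - x i)) = 1 := by
  have h := congrArg (fun p => coeff p (s.card + 1)) (key1 s x hs hinj)
  simp only [finsetSum_coeff, coeff_C_mul, coeff_sub, coeff_X_mul] at h
  have hG : (∏ i ∈ s, (1 - X * C (x i))).natDegree ≤ s.card := by
    refine (natDegree_prod_le _ _).trans ?_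
    refine (Finset.sum_le_card_nsmul _ _ 1 ?_).trans (by simp)
    intro i _
    compute_degree
  have hF : (∏ i ∈ s, (X - C (x i))).coeff s.card = 1 := by
    have := (monic_prod_X_sub_C x s).coeff_natDegree
    rwa [natDegree_finsetProd_X_sub_C_eq_card] at this
  rw [hF, coeff_eq_zero_of_natDegree_lt (by omega), sub_zero] at h
  refine Eq.trans ?_ h
  refine Finset.sum_congr rfl fun b hb => ?_
  have hmon : (X ^ 2 - 1 : K[X]).Monic := by monicity!
  have hd2 : (X ^ 2 - 1 : K[X]).natDegree = 2 := by compute_degree!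
  have hm := hmon.mul (monic_prod_X_sub_C x (s.erase b))
  have := hm.coeff_natDegree
  rw [hmon.natDegree_mul (monic_prod_X_sub_C x (s.erase b)), hd2,
    natDegree_finsetProd_X_sub_C_eq_card, Finset.card_erase_of_mem hb] at this
  have e : 2 + (s.card - 1) = s.card + 1 := by have := hs.pos; omega
  rw [e] at this
  rw [this, mul_one]

lemma key3 {K ι : Type*} [Field K] [CharZero K] [DecidableEq ι] (s : Finset ι) (x : ι → K)
    (hs : Odd s.card) (hinj : Set.InjOn x s) (z : K) :
    ∑ b ∈ s, (∏ i ∈ s.erase b, (1 - x b * x i) / (x b - x i)) *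
        ((1 - z * x b) * ∏ i ∈ s.erase b, (z - x i)) = ∏ i ∈ s, (1 - z * x i) := by
  have h1 := congrArg (Polynomial.eval z) (key1 s x hs hinj)
  simp only [Polynomial.eval_finsetSum, Polynomial.eval_mul, Polynomial.eval_C,
    Polynomial.eval_sub, Polynomial.eval_pow, Polynomial.eval_X, Polynomial.eval_one,
    Polynomial.eval_prod] at h1
  have h2 := key2 s x hs hinj
  have h3 : ∑ b ∈ s, (∏ i ∈ s.erase b, (1 - x b * x i) / (x b - x i)) *
        ((1 - z * x b) * ∏ i ∈ s.erase b, (z - x i)) =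
      (∑ b ∈ s, (∏ i ∈ s.erase b, (1 - x b * x i) / (x b - x i))) * (z * ∏ i ∈ s, (z - x i))
      - ∑ b ∈ s, (∏ i ∈ s.erase b, (1 - x b * x i) / (x b - x i)) *
        ((z ^ 2 - 1) * ∏ i ∈ s.erase b, (z - x i)) := by
    rw [Finset.sum_mul, ← Finset.sum_sub_distrib]
    refine Finset.sum_congr rfl fun b hb => ?_
    rw [← Finset.mul_prod_erase s (fun i => z - x i) hb]
    ring
  rw [h3, h2, h1]; ring

lemma key4 {K ι : Type*} [Field K] [CharZero K] [DecidableEq ι] (s : Finset ι) (x : ι → K)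
    (hs : Odd s.card) (hinj : Set.InjOn x s) (y : K) (hy : y ≠ 0) :
    ∑ b ∈ s, (∏ i ∈ s.erase b, (1 - x b * x i) / (x b - x i)) *
        ((y - x b) * ∏ i ∈ s.erase b, (1 - y * x i)) = ∏ i ∈ s, (y - x i) := by
  have h := congrArg (fun t => t * y ^ s.card) (key3 s x hs hinj y⁻¹)
  have e : ∀ (t : Finset ι) (f g : ι → K), (∀ i, f i * y = g i) →
      (∏ i ∈ t, f i) * y ^ t.card = ∏ i ∈ t, g i := by
    intro t f g hfg
    rw [← Finset.prod_const, ← Finset.prod_mul_distrib]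
    exact Finset.prod_congr rfl fun i _ => hfg i
  rw [e s _ (fun i => y - x i) (fun i => by field_simp), Finset.sum_mul] at h
  rw [← h]
  refine Finset.sum_congr rfl fun b hb => ?_
  rw [← e (s.erase b) (fun i => y⁻¹ - x i) (fun i => 1 - y * x i) (fun i => by field_simp),
    ← Finset.card_erase_add_one hb, pow_succ]
  have h1 : (1 - y⁻¹ * x b) * y = y - x b := by field_simp
  rw [← h1]
  ring

open Polynomial in
lemma key5 {K ι : Type*} [Field K] [CharZero K] [DecidableEq ι] (s : Finset ι) (x : ι → K)
    (hs : Odd s.card) (hinj : Set.InjOn x s) (y : K) :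
    ∑ b ∈ s, (∏ i ∈ s.erase b, (1 - x b * x i) / (x b - x i)) *
        ((y - x b) * ∏ i ∈ s.erase b, (1 - y * x i)) = ∏ i ∈ s, (y - x i) := by
  have : (∑ b ∈ s, C (∏ i ∈ s.erase b, (1 - x b * x i) / (x b - x i)) *
        ((X - C (x b)) * ∏ i ∈ s.erase b, (1 - X * C (x i)))) = ∏ i ∈ s, (X - C (x i)) := by
    apply eq_of_infinite_eval_eq
    refine (Set.finite_singleton (0 : K)).infinite_compl.mono ?_
    intro t ht
    have := key4 s x hs hinj t ht
    simpa [eval_finsetSum, eval_prod, mul_comm t] using this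
  have h := congrArg (eval y) this
  simpa [eval_finsetSum, eval_prod, mul_comm y] using h

lemma key6 {K ι : Type*} [Field K] [CharZero K] [DecidableEq ι] (s : Finset ι) (x : ι → K)
    (hs : Odd s.card) (hinj : Set.InjOn x s) (y : K) (hy : ∀ i ∈ s, y ≠ x i) :
    ∑ b ∈ s, ∏ i ∈ s.erase b, (((y - x i) / (1 - y * x i))⁻¹ *
      ((x b - x i) / (1 - x b * x i))⁻¹) = 1 := by
  have hf : ∏ i ∈ s, (y - x i) ≠ 0 := Finset.prod_ne_zero_iff.2 fun i hi => sub_ne_zero.2 (hy i hi)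
  apply mul_right_cancel₀ hf
  rw [one_mul]
  conv_rhs => rw [← key5 s x hs hinj y]
  rw [Finset.sum_mul]
  refine Finset.sum_congr rfl fun b hb => ?_
  rw [← Finset.mul_prod_erase s (fun i => y - x i) hb]
  have : ∏ i ∈ s.erase b, (1 - y * x i) = (∏ i ∈ s.erase b, (1 - y * x i) / (y - x i)) *
      ∏ i ∈ s.erase b, (y - x i) := by
    rw [← Finset.prod_mul_distrib]
    exact Finset.prod_congr rfl fun i hi =>
      (div_mul_cancel₀ _ (sub_ne_zero.2 (hy i (Finset.mem_of_mem_erase hi)))).symm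
  rw [this, Finset.prod_mul_distrib]
  simp only [inv_div]
  ring

open Equiv

/-- The kernel `S(x,y)`. -/
noncomputable def stS {K : Type*} [Field K] (a b : K) : K := (a - b) / (1 - a * b)

lemma stS_anti {K : Type*} [Field K] (a b : K) : stS a b = - stS b a := by
  unfold stS; rw [mul_comm b a, ← neg_div, neg_sub]

/-- Product side. -/
noncomputable def stD {K : Type*} [Field K] (m : ℕ) (x : Fin m → K) : K :=
  ∏ i : Fin m, ∏ j ∈ Finset.Ioi i, stS (x i) (x j)

/-- Matching term. -/
noncomputable def stT {K : Type*} [Field K] (n : ℕ) (x : Fin (2 * n) → K) : K :=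
  ∏ i : Fin n, stS (x ⟨2 * i.1, by have := i.2; omega⟩) (x ⟨2 * i.1 + 1, by have := i.2; omega⟩)

/-- Unnormalized Pfaffian. -/
noncomputable def stP {K : Type*} [Field K] (n : ℕ) (x : Fin (2 * n) → K) : K :=
  ∑ σ : Perm (Fin (2 * n)), ((Perm.sign σ : ℤ) : K) * stT n (x ∘ σ)

lemma stD_perm {K : Type*} [Field K] (m : ℕ) (x : Fin m → K) (σ : Perm (Fin m)) :
    stD m (x ∘ σ) = ((Perm.sign σ : ℤ) : K) * stD m x :=
  Perm.prod_Ioi_comp_eq_sign_mul_prod σ (f := fun i j => stS (x i) (x j))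
    (fun _ _ => stS_anti _ _)

lemma sign_sq {K : Type*} [Field K] {m : ℕ} (σ : Perm (Fin m)) :
    ((Perm.sign σ : ℤ) : K) * ((Perm.sign σ : ℤ) : K) = 1 := by
  rcases Int.units_eq_one_or (Perm.sign σ) with h | h <;> simp [h]

lemma stP_perm {K : Type*} [Field K] (n : ℕ) (x : Fin (2 * n) → K) (τ : Perm (Fin (2 * n))) :
    stP n (x ∘ τ) = ((Perm.sign τ : ℤ) : K) * stP n x := by
  unfold stP
  rw [← Equiv.sum_comp (Equiv.mulLeft τ) (fun σ : Perm (Fin (2 * n)) =>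
    ((Perm.sign σ : ℤ) : K) * stT n (x ∘ σ)), Finset.mul_sum]
  refine Finset.sum_congr rfl fun σ _ => ?_
  have e : x ∘ ⇑(Equiv.mulLeft τ σ) = (x ∘ τ) ∘ σ := by ext; simp
  rw [e]
  simp only [Equiv.coe_mulLeft, Perm.sign_mul, Units.val_mul, Int.cast_mul]
  rw [← mul_assoc, ← mul_assoc, sign_sq, one_mul]

/-- If two entries agree, both sides vanish. -/
lemma st_degenerate {K : Type*} [Field K] [CharZero K] (n : ℕ) (x : Fin (2 * n) → K)
    (h : ¬ Function.Injective x) : stP n x = 0 ∧ stD (2 * n) x = 0 := by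
  simp only [Function.Injective, not_forall] at h
  obtain ⟨i, j, hij, hne⟩ := h
  have e : x ∘ swap i j = x := by
    ext k
    simp only [Function.comp_apply, swap_apply_def]
    split_ifs with h1 h2 <;> simp_all
  have h1 := stP_perm n x (swap i j)
  have h2 := stD_perm (2 * n) x (swap i j)
  rw [e, Perm.sign_swap hne] at h1 h2
  simp only [Units.val_neg, Units.val_one, Int.cast_neg, Int.cast_one, neg_mul, one_mul] at h1 h2
  exact ⟨self_eq_neg.1 h1, self_eq_neg.1 h2⟩

/-- `F(v) = S(v0,v1) D(v2,...)`. -/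
noncomputable def stF {K : Type*} [Field K] (n : ℕ) (v : Fin (2 * n + 2) → K) : K :=
  stS (v 0) (v 1) * stD (2 * n) (fun i => v i.succ.succ)

lemma stD_succ {K : Type*} [Field K] (n : ℕ) (v : Fin (2 * n + 2) → K) :
    stD (2 * n + 2) v = stF n v * ∏ i : Fin (2 * n),
      (stS (v 0) (v i.succ.succ) * stS (v 1) (v i.succ.succ)) := by
  unfold stF stD
  rw [Fin.prod_univ_succ, Fin.prod_Ioi_zero, Fin.prod_univ_succ, Fin.prod_univ_succ,
    Fin.prod_Ioi_succ, Fin.prod_Ioi_zero, Finset.prod_mul_distrib]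
  simp only [Fin.prod_Ioi_succ, Fin.succ_zero_eq_one]
  ring

lemma stT_succ {K : Type*} [Field K] (n : ℕ) (v : Fin (2 * n + 2) → K) :
    stT (n + 1) v = stS (v 0) (v 1) * stT n (fun i => v i.succ.succ) := by
  unfold stT
  rw [Fin.prod_univ_succ]
  rfl

/-- Extend a permutation by fixing the first two points. -/
def stExt {m : ℕ} (τ : Perm (Fin m)) : Perm (Fin (m + 2)) :=
  Perm.decomposeFin.symm (0, Perm.decomposeFin.symm (0, τ))

lemma stExt_sign {m : ℕ} (τ : Perm (Fin m)) : Perm.sign (stExt τ) = Perm.sign τ := by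
  simp [stExt]

lemma stExt_zero {m : ℕ} (τ : Perm (Fin m)) : stExt τ 0 = 0 := by
  simp [stExt]

lemma stExt_one {m : ℕ} (τ : Perm (Fin m)) : stExt τ 1 = 1 := by
  simp [stExt]

lemma stExt_succ {m : ℕ} (τ : Perm (Fin m)) (i : Fin m) :
    stExt τ i.succ.succ = (τ i).succ.succ := by
  simp [stExt]

/-- First evaluation of the antisymmetrized `F`. -/
lemma stQ_one {K : Type*} [Field K] [CharZero K] (n : ℕ) (w : Fin (2 * n + 2) → K)
    (c : K) (ih : ∀ σ : Perm (Fin (2 * n + 2)), stP n (fun i => w (σ i.succ.succ)) =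
      c * stD (2 * n) (fun i => w (σ i.succ.succ))) :
    c * ∑ σ : Perm (Fin (2 * n + 2)), ((Perm.sign σ : ℤ) : K) * stF n (w ∘ σ) =
      ((2 * n).factorial : K) * stP (n + 1) w := by
  calc c * ∑ σ : Perm (Fin (2 * n + 2)), ((Perm.sign σ : ℤ) : K) * stF n (w ∘ σ)
      = ∑ σ : Perm (Fin (2 * n + 2)), ∑ τ : Perm (Fin (2 * n)),
          ((Perm.sign (σ * stExt τ) : ℤ) : K) * stT (n + 1) (w ∘ ⇑(σ * stExt τ)) := by
        rw [Finset.mul_sum]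
        refine Finset.sum_congr rfl fun σ _ => ?_
        have : c * (((Perm.sign σ : ℤ) : K) * stF n (w ∘ σ)) = ((Perm.sign σ : ℤ) : K) *
            stS (w (σ 0)) (w (σ 1)) * (c * stD (2 * n) (fun i => w (σ i.succ.succ))) := by
          simp only [stF, Function.comp_apply]; ring
        rw [this, ← ih σ, stP, Finset.mul_sum]
        refine Finset.sum_congr rfl fun τ _ => ?_
        rw [stT_succ]
        simp only [Perm.sign_mul, Units.val_mul, Int.cast_mul, stExt_sign, Function.comp_apply,
          Perm.mul_apply, stExt_zero, stExt_one, stExt_succ]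
        have : (fun i => w (σ (Fin.succ (Fin.succ i)))) ∘ ⇑τ =
          fun i => w (σ (τ i).succ.succ) := rfl
        rw [this]
        ring
    _ = ∑ τ : Perm (Fin (2 * n)), stP (n + 1) w := by
        rw [Finset.sum_comm]
        refine Finset.sum_congr rfl fun τ _ => ?_
        exact Equiv.sum_comp (Equiv.mulRight (stExt τ)) (fun σ : Perm (Fin (2 * n + 2)) =>
          ((Perm.sign σ : ℤ) : K) * stT (n + 1) (w ∘ σ))
    _ = ((2 * n).factorial : K) * stP (n + 1) w := by
        rw [Finset.sum_const, Finset.card_univ, Fintype.card_perm, Fintype.card_fin, nsmul_eq_mul]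

/-- The weight `R(a,b)`. -/
noncomputable def stR {K : Type*} [Field K] {m : ℕ} (w : Fin m → K) (a b : Fin m) : K :=
  ∏ i ∈ (Finset.univ.erase a).erase b, ((stS (w a) (w i))⁻¹ * (stS (w b) (w i))⁻¹)

lemma stR_perm {K : Type*} [Field K] {m : ℕ} (w : Fin (m + 2) → K) (σ : Perm (Fin (m + 2))) :
    stR w (σ 0) (σ 1) = ∏ i : Fin m, ((stS (w (σ 0)) (w (σ i.succ.succ)))⁻¹ *
      (stS (w (σ 1)) (w (σ i.succ.succ)))⁻¹) := by
  symm
  unfold stR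
  refine Finset.prod_bij (fun i _ => σ i.succ.succ) ?_ ?_ ?_ ?_
  · intro i _
    simp only [Finset.mem_erase, Finset.mem_univ, and_true, ne_eq, EmbeddingLike.apply_eq_iff_eq]
    refine ⟨?_, Fin.succ_ne_zero _⟩
    rw [← Fin.succ_zero_eq_one, Fin.succ_inj]
    exact Fin.succ_ne_zero _
  · intro i _ j _ h
    simpa using h
  · intro b hb
    simp only [Finset.mem_erase, Finset.mem_univ, and_true] at hb
    obtain ⟨k, rfl⟩ := σ.surjective b
    have h0 : k ≠ 0 := fun h => hb.2 (by rw [h])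
    obtain ⟨k, rfl⟩ := Fin.exists_succ_eq.2 h0
    have h1 : k ≠ 0 := fun h => hb.1 (by rw [h, Fin.succ_zero_eq_one])
    obtain ⟨k, rfl⟩ := Fin.exists_succ_eq.2 h1
    exact ⟨k, Finset.mem_univ _, rfl⟩
  · intro i _; rfl

lemma stR_sum {K : Type*} [Field K] [CharZero K] (n : ℕ) (w : Fin (2 * n + 2) → K)
    (hw : Function.Injective w) (a : Fin (2 * n + 2)) :
    ∑ b ∈ Finset.univ.erase a, stR w a b = 1 := by
  refine key6 (Finset.univ.erase a) w ?_ hw.injOn (w a) ?_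
  · rw [Finset.card_erase_of_mem (Finset.mem_univ _), Finset.card_univ, Fintype.card_fin]
    exact ⟨n, rfl⟩
  · intro i hi h
    exact (Finset.ne_of_mem_erase hi) (hw h).symm

lemma stR_sum_perm {K : Type*} [Field K] [CharZero K] (n : ℕ) (w : Fin (2 * n + 2) → K)
    (hw : Function.Injective w) :
    (2 * n + 1 : K) * ∑ σ : Perm (Fin (2 * n + 2)), stR w (σ 0) (σ 1) =
      ((2 * n + 2).factorial : K) := by
  have h1 : ∀ j ∈ Finset.univ.erase (0 : Fin (2 * n + 2)),
      ∑ σ : Perm (Fin (2 * n + 2)), stR w (σ 0) (σ j) =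
      ∑ σ : Perm (Fin (2 * n + 2)), stR w (σ 0) (σ 1) := by
    intro j hj
    rw [← Equiv.sum_comp (Equiv.mulRight (swap 1 j)) (fun σ : Perm (Fin (2 * n + 2)) =>
      stR w (σ 0) (σ 1))]
    refine Finset.sum_congr rfl fun σ _ => ?_
    have h0 : swap 1 j (0 : Fin (2 * n + 2)) = 0 :=
      swap_apply_of_ne_of_ne (by simp) (Finset.ne_of_mem_erase hj).symm
    simp only [Equiv.coe_mulRight, Perm.mul_apply, h0, swap_apply_left]
  have h2 := Finset.sum_congr (rfl : Finset.univ.erase (0 : Fin (2 * n + 2)) = _) h1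
  rw [Finset.sum_const, Finset.card_erase_of_mem (Finset.mem_univ _), Finset.card_univ,
    Fintype.card_fin, nsmul_eq_mul, Finset.sum_comm] at h2
  have e : ((2 * n + 2 - 1 : ℕ) : K) = 2 * n + 1 := by
    rw [show 2 * n + 2 - 1 = 2 * n + 1 by omega]; push_cast; ring
  rw [e] at h2
  rw [← h2]
  have h3 : ∀ σ : Perm (Fin (2 * n + 2)),
      ∑ j ∈ Finset.univ.erase (0 : Fin (2 * n + 2)), stR w (σ 0) (σ j) = 1 := by
    intro σ
    rw [← stR_sum n w hw (σ 0)]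
    refine Finset.sum_equiv σ ?_ (fun _ _ => rfl)
    intro i; simp
  rw [Finset.sum_congr rfl fun σ _ => h3 σ]
  rw [Finset.sum_const, Finset.card_univ, Fintype.card_perm, Fintype.card_fin, nsmul_eq_mul,
    mul_one]

/-- Second evaluation. -/
lemma stQ_two {K : Type*} [Field K] [CharZero K] (n : ℕ) (w : Fin (2 * n + 2) → K)
    (hw : Function.Injective w) (hx : ∀ i j, i ≠ j → 1 - w i * w j ≠ 0) :
    ∑ σ : Perm (Fin (2 * n + 2)), ((Perm.sign σ : ℤ) : K) * stF n (w ∘ σ) =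
      stD (2 * n + 2) w * ∑ σ : Perm (Fin (2 * n + 2)), stR w (σ 0) (σ 1) := by
  rw [Finset.mul_sum]
  refine Finset.sum_congr rfl fun σ _ => ?_
  have hS : ∀ i j, i ≠ j → stS (w (σ i)) (w (σ j)) ≠ 0 := fun i j hij =>
    div_ne_zero (sub_ne_zero.2 (fun h => hij (σ.injective (hw h))))
      (hx _ _ (fun h => hij (σ.injective h)))
  have h1 : stD (2 * n + 2) w = ((Perm.sign σ : ℤ) : K) * stD (2 * n + 2) (w ∘ σ) := by
    rw [stD_perm, ← mul_assoc, sign_sq, one_mul]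
  rw [h1, stD_succ, stR_perm, mul_assoc, mul_assoc, ← Finset.prod_mul_distrib,
    Finset.prod_eq_one, mul_one]
  intro i _
  have a0 := hS 0 i.succ.succ (Fin.succ_ne_zero _).symm
  have a1 := hS 1 i.succ.succ (by
    rw [← Fin.succ_zero_eq_one, Ne, Fin.succ_inj]
    exact (Fin.succ_ne_zero _).symm)
  simp only [Function.comp_apply]
  field_simp

lemma st_main {K : Type*} [Field K] [CharZero K] (n : ℕ) : ∀ (x : Fin (2 * n) → K),
    (∀ i j, i ≠ j → 1 - x i * x j ≠ 0) →
    stP n x = ((2 : K) ^ n * (n.factorial : K)) * stD (2 * n) x := by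
  induction n with
  | zero =>
    intro x _
    have : Subsingleton (Perm (Fin (2 * 0))) := inferInstanceAs (Subsingleton (Perm (Fin 0)))
    have h : stP 0 x = 1 := by
      unfold stP
      rw [Fintype.sum_subsingleton _ 1]
      simp [stT]
    have h' : stD (2 * 0) x = 1 := by
      unfold stD
      exact Finset.prod_of_isEmpty (ι := Fin 0) _
    rw [h, h']; simp
  | succ n ih =>
    intro x hx
    by_cases hinj : Function.Injective x
    · have q1 := stQ_one n x _ (fun σ => ih (fun i => x (σ i.succ.succ)) (fun i j hij =>
        hx _ _ (fun h => hij (by simpa using h))))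
      rw [stQ_two n x hinj hx] at q1
      have q2 := stR_sum_perm n x hinj
      have hf : ((2 * n).factorial : K) ≠ 0 := by exact_mod_cast Nat.factorial_ne_zero _
      have hn : (2 * n + 1 : K) ≠ 0 := by exact_mod_cast Nat.succ_ne_zero (2 * n)
      have e1 : ((2 * n + 2).factorial : K) =
          (2 * n + 2) * ((2 * n + 1) * ((2 * n).factorial : K)) := by
        rw [Nat.factorial_succ, Nat.factorial_succ]; push_cast; ring
      have e2 : ((n + 1).factorial : K) = (n + 1) * (n.factorial : K) := by
        rw [Nat.factorial_succ]; push_cast; ring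
      rw [e1] at q2
      apply mul_left_cancel₀ (mul_ne_zero hn hf)
      rw [e2, pow_succ]
      change _ = _ * (_ * stD (2 * n + 2) x)
      linear_combination (-(2 * n + 1 : K)) * q1 +
        (2 ^ n * (n.factorial : K) * stD (2 * n + 2) x) * q2
    · obtain ⟨h1, h2⟩ := st_degenerate (n + 1) x hinj
      rw [h1, h2, mul_zero]

/-- Stembridge's Pfaffian identity (even case):
`∏_{i<j} (x_i - x_j)/(1 - x_i x_j) = Pf[(x_i - x_j)/(1 - x_i x_j)]`. -/
theorem stembridge_pfaffian_even {K : Type*} [Field K] [CharZero K] (n : ℕ) (hn : 1 ≤ n)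
    (x : Fin (2 * n) → K) (hx : ∀ i j, i ≠ j → 1 - x i * x j ≠ 0) :
    (∏ i : Fin (2 * n), ∏ j ∈ Finset.Ioi i, (x i - x j) / (1 - x i * x j))
      = pf n (Matrix.of fun i j => (x i - x j) / (1 - x i * x j)) := by
  have hc : (2 : K) ^ n * (n.factorial : K) ≠ 0 :=
    mul_ne_zero (pow_ne_zero _ two_ne_zero) (by exact_mod_cast Nat.factorial_ne_zero _)
  unfold pf
  rw [eq_div_iff hc, mul_comm]
  exact (st_main n x hx).symm
end

section
/- Stembridge's Pfaffian identity (odd case): for an odd number m = 2n-1 of variables x_1,...,x_{2n-1} in a field with x_i x_j ≠ 1 for all i < j, one has ∏_{1 ≤ i < j ≤ 2n-1} (x_i - x_j)/(1 - x_i x_j) = Pf of the 2n×2n skew-symmetric matrix whose top-left (2n-1)×(2n-1) block has entries S(x_i,x_j) = (x_i - x_j)/(1 - x_i x_j), whose last column is the all-ones vector (with last entry 0), and whose last row is minus the all-ones vector. -/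
/-- Unnormalised Pfaffian. -/
def pfT {R : Type*} [CommRing R] (n : ℕ) (A : Fin (2 * n) → Fin (2 * n) → R) : R :=
  ∑ σ : Equiv.Perm (Fin (2 * n)), ((Equiv.Perm.sign σ : ℤ) : R) *
      ∏ i : Fin n,
        A (σ ⟨2 * i.1, by have := i.2; omega⟩) (σ ⟨2 * i.1 + 1, by have := i.2; omega⟩)

/-- Product over pairs `i < j`. -/
def prP {R : Type*} [CommRing R] {N : ℕ} (A : Fin N → Fin N → R) : R :=
  ∏ i : Fin N, ∏ j : Fin N, if i < j then A i j else 1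

theorem perm_sum_succ {R : Type*} [CommRing R] (N : ℕ)
    (f : (Fin (N + 1) → Fin (N + 1)) → R) :
    ∑ σ : Equiv.Perm (Fin (N + 1)), ((Equiv.Perm.sign σ : ℤ) : R) * f σ
      = ∑ a : Fin (N + 1), ∑ τ : Equiv.Perm (Fin N),
          (-1) ^ (a : ℕ) * (((Equiv.Perm.sign τ : ℤ) : R) *
            f (Fin.cons a (fun k => a.succAbove (τ k)))) := by
  rw [← Fintype.sum_prod_type']
  symm
  have key : ∀ p : Fin (N + 1) × Equiv.Perm (Fin N),
      (⇑(p.1.cycleRange.symm * Equiv.Perm.decomposeFin.symm (0, p.2)) : Fin (N + 1) → Fin (N + 1))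
        = Fin.cons p.1 (fun k => p.1.succAbove (p.2 k)) := by
    intro p
    funext k
    refine Fin.cases ?_ (fun k => ?_) k
    · simp
    · simp [Fin.cycleRange_symm_succ]
  refine Fintype.sum_bijective
    (fun p : Fin (N + 1) × Equiv.Perm (Fin N) =>
      p.1.cycleRange.symm * Equiv.Perm.decomposeFin.symm (0, p.2)) ?_ _ _ ?_
  · rw [Fintype.bijective_iff_injective_and_card]
    constructor
    · rintro ⟨a, τ⟩ ⟨b, ρ⟩ h
      have h' := congrArg (fun e : Equiv.Perm (Fin (N + 1)) => (e : Fin (N + 1) → Fin (N + 1))) h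
      have h' : (Fin.cons a (fun k => a.succAbove (τ k)) : Fin (N + 1) → Fin (N + 1))
          = Fin.cons b (fun k => b.succAbove (ρ k)) :=
        (key (a, τ)).symm.trans (h'.trans (key (b, ρ)))
      have h0 := congrFun h' 0
      simp only [Fin.cons_zero] at h0
      subst h0
      have : τ = ρ := by
        ext k
        have hk := congrFun h' k.succ
        simp only [Fin.cons_succ] at hk
        exact congrArg Fin.val (Fin.succAbove_right_injective hk)
      rw [this]
    · simp [Fintype.card_perm, Nat.factorial_succ]
  · intro p
    simp only [key]
    simp [Equiv.Perm.sign_mul, Equiv.Perm.sign_symm, Fin.sign_cycleRange, mul_assoc]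

theorem pfT_succ {R : Type*} [CommRing R] (n : ℕ) (A : Fin (2 * (n + 1)) → Fin (2 * (n + 1)) → R) :
    pfT (n + 1) A = ∑ a : Fin (2 * n + 1 + 1), ∑ b : Fin (2 * n + 1),
      (-1) ^ (a : ℕ) * ((-1) ^ (b : ℕ) * (A a (a.succAbove b) *
        pfT n (fun i j => A (a.succAbove (b.succAbove i)) (a.succAbove (b.succAbove j))))) := by
  unfold pfT
  have h := perm_sum_succ (2 * n + 1) (fun s : Fin (2 * n + 1 + 1) → Fin (2 * n + 1 + 1) =>
    ∏ i : Fin (n + 1), A (s ⟨2 * i.1, by have := i.2; omega⟩)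
      (s ⟨2 * i.1 + 1, by have := i.2; omega⟩))
  refine h.trans ?_
  refine Finset.sum_congr rfl fun a _ => ?_
  rw [← Finset.mul_sum]
  have h2 := perm_sum_succ (2 * n) (fun s : Fin (2 * n + 1) → Fin (2 * n + 1) =>
    ∏ i : Fin (n + 1), A
      ((Fin.cons a (fun k => a.succAbove (s k)) : Fin (2 * n + 1 + 1) → Fin (2 * n + 1 + 1))
        ⟨2 * i.1, by have := i.2; omega⟩)
      ((Fin.cons a (fun k => a.succAbove (s k)) : Fin (2 * n + 1 + 1) → Fin (2 * n + 1 + 1))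
        ⟨2 * i.1 + 1, by have := i.2; omega⟩))
  rw [h2, Finset.mul_sum]
  refine Finset.sum_congr rfl fun b _ => ?_
  rw [← Finset.mul_sum, Finset.mul_sum (a := A a (a.succAbove b))]
  congr 2
  refine Finset.sum_congr rfl fun τ _ => ?_
  rw [Fin.prod_univ_succ]
  rw [mul_left_comm (A a (a.succAbove b))]
  congr 1

theorem prP_delete {R : Type*} [CommRing R] {N : ℕ} (A : Fin (N + 1) → Fin (N + 1) → R)
    (hA : ∀ i j, A i j = - A j i) (a : Fin (N + 1)) :
    prP A = (-1) ^ (a : ℕ) * (∏ c : Fin N, A a (a.succAbove c)) *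
      prP (fun i j => A (a.succAbove i) (a.succAbove j)) := by
  unfold prP
  rw [Fin.prod_univ_succAbove _ a]
  rw [Fin.prod_univ_succAbove _ a]
  simp_rw [Fin.prod_univ_succAbove (fun j => if (a.succAbove _) < j then A (a.succAbove _) j else 1) a]
  rw [Finset.prod_mul_distrib]
  simp only [lt_self_iff_false, if_false, one_mul, Fin.succAbove_lt_succAbove_iff]
  rw [← mul_assoc, ← Finset.prod_mul_distrib]
  congr 1
  have h1 : ∀ c : Fin N, ((if a < a.succAbove c then A a (a.succAbove c) else 1) *
      if a.succAbove c < a then A (a.succAbove c) a else 1)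
      = (if c.1 < a.1 then -1 else 1) * A a (a.succAbove c) := by
    intro c
    have h2 : a.succAbove c < a ↔ c.1 < a.1 := by
      rw [Fin.succAbove_lt_iff_castSucc_lt]; rfl
    have h3 : a < a.succAbove c ↔ ¬ c.1 < a.1 := by
      rw [← h2]
      have := Fin.succAbove_ne a c
      constructor
      · intro h; exact not_lt.2 h.le
      · intro h; exact lt_of_le_of_ne (not_lt.1 h) this.symm
    by_cases h : c.1 < a.1
    · simp [h2, h3, h]; exact hA _ _
    · simp [h2, h3, h]
  rw [Finset.prod_congr rfl fun c _ => h1 c, Finset.prod_mul_distrib]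
  congr 1
  rw [Finset.prod_ite, Finset.prod_const_one, mul_one, Finset.prod_const]
  congr 1
  have := a.2
  rw [Fin.card_filter_val_lt]
  omega

theorem row_identity {L : Type*} [Field L] [CharZero L] (m : ℕ) (hm : Odd m) (x : L) (y : Fin m → L)
    (hy : Function.Injective y) (hx0 : x ≠ 0) (hx1 : x * x ≠ 1) (hxy : ∀ c, x * y c ≠ 1)
    (hyy : ∀ b c, y b * y c ≠ 1) :
    ∑ b, (x - y b) / (1 - x * y b) * (∏ c, if c = b then 1 else (y b - y c) / (1 - y b * y c))⁻¹
      = ∏ c, (x - y c) / (1 - x * y c) := by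
  classical
  have hx1' : x ≠ 1 := by rintro rfl; simp at hx1
  have hx2' : x ≠ -1 := by rintro rfl; simp at hx1
  have hy1 : ∀ c, y c ≠ 1 := fun c h => hyy c c (by simp [h])
  have hy2 : ∀ c, y c ≠ -1 := fun c h => hyy c c (by simp [h])
  have hxi : ∀ c, x⁻¹ ≠ y c := by
    intro c h; apply hxy c; rw [← h]; field_simp
  have hi1 : x⁻¹ ≠ 1 := by simpa using hx1'
  have hi2 : x⁻¹ ≠ -1 := by
    intro h; apply hx2'; rw [← inv_inv x, h]; norm_num
  let v : Option (Option (Option (Fin m))) → L := fun o => match o with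
    | none => 1
    | some none => -1
    | some (some none) => x⁻¹
    | some (some (some c)) => y c
  have h11 : (1 : L) ≠ -1 := by norm_num
  have hv : Function.Injective v := by
    rintro (_ | _ | _ | a) (_ | _ | _ | b) h <;> simp only [v] at h <;>
      first
      | rfl
      | exact absurd h h11
      | exact absurd h.symm h11
      | exact absurd h hi1
      | exact absurd h.symm hi1
      | exact absurd h hi2
      | exact absurd h.symm hi2
      | exact absurd h (hy1 _)
      | exact absurd h.symm (hy1 _)
      | exact absurd h (hy2 _)
      | exact absurd h.symm (hy2 _)
      | exact absurd h (hxi _)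
      | exact absurd h.symm (hxi _)
      | (rw [hy h])
  let p : Polynomial L := (Polynomial.C x - Polynomial.X) *
    ∏ c, (Polynomial.C 1 - Polynomial.X * Polynomial.C (y c))
  have hdeg : p.natDegree ≤ m + 1 := by
    refine Polynomial.natDegree_mul_le.trans ?_
    have h1 : (Polynomial.C x - Polynomial.X : Polynomial L).natDegree ≤ 1 := by compute_degree
    have h2 : (∏ c, (Polynomial.C 1 - Polynomial.X * Polynomial.C (y c)) : Polynomial L).natDegree ≤ m := by
      refine (Polynomial.natDegree_prod_le _ _).trans ?_
      refine (Finset.sum_le_card_nsmul _ _ 1 ?_).trans (by simp)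
      intro c _
      compute_degree
    omega
  have hcard : (Finset.univ : Finset (Option (Option (Option (Fin m))))).card = m + 3 := by
    simp
  have key := Lagrange.coeff_eq_sum (s := Finset.univ) (v := v) hv.injOn (P := p) (by
    rw [hcard]
    refine lt_of_le_of_lt Polynomial.degree_le_natDegree ?_
    exact_mod_cast by omega)
  rw [hcard, Polynomial.coeff_eq_zero_of_natDegree_lt (by omega)] at key
  have herase : ∀ i, ∏ j ∈ Finset.univ.erase i, (v i - v j) = ∏ j, if j = i then 1 else v i - v j := by
    intro i
    rw [← Finset.mul_prod_erase Finset.univ _ (Finset.mem_univ i)]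
    simp only [if_true, one_mul]
    refine Finset.prod_congr rfl fun j hj => ?_
    rw [if_neg (Finset.ne_of_mem_erase hj)]
  have heval : ∀ z, p.eval z = (x - z) * ∏ c, (1 - z * y c) := by
    intro z; simp only [p, Polynomial.eval_prod, Polynomial.eval_mul, Polynomial.eval_sub, Polynomial.eval_C, Polynomial.eval_X]
  simp only [herase, heval, Fintype.sum_option, Fintype.prod_option] at key
  simp only [v, Option.some_inj, reduceCtorEq, if_true, if_false, one_mul] at key
  have n1 : (x - 1) * (∏ c, (1 - 1 * y c)) / ((1 - -1) * ((1 - x⁻¹) * ∏ c, (1 - y c))) = x / 2 := by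
    have : ∏ c, (1 - y c) ≠ 0 := Finset.prod_ne_zero_iff.2 fun c _ => sub_ne_zero.2 (hy1 c).symm
    have h3 : 1 - x⁻¹ = (x - 1) / x := by field_simp
    have h4 : x - 1 ≠ 0 := sub_ne_zero.2 hx1'
    simp only [one_mul]
    rw [h3]
    field_simp
    norm_num
  have n2 : (x - -1) * (∏ c, (1 - -1 * y c)) / ((-1 - 1) * ((-1 - x⁻¹) * ∏ c, (-1 - y c))) = - (x / 2) := by
    have h0 : ∏ c, (1 - -1 * y c) = - ∏ c, (-1 - y c) := by
      have : ∀ c, 1 - -1 * y c = (-1) * (-1 - y c) := fun c => by ring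
      simp only [this, Finset.prod_mul_distrib, Finset.prod_const, Finset.card_univ, Fintype.card_fin,
        hm.neg_one_pow]
      ring
    have : ∏ c, (-1 - y c) ≠ 0 := Finset.prod_ne_zero_iff.2 fun c _ => sub_ne_zero.2 (hy2 c).symm
    rw [h0]
    have h3 : -1 - x⁻¹ = -((x + 1) / x) := by field_simp; ring
    have h4 : x + 1 ≠ 0 := fun h => hx2' (eq_neg_of_add_eq_zero_left h)
    rw [h3]
    field_simp
    ring
  have n3 : (x - x⁻¹) * (∏ c, (1 - x⁻¹ * y c)) / ((x⁻¹ - 1) * ((x⁻¹ - -1) * ∏ c, (x⁻¹ - y c)))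
      = - x * ∏ c, (x - y c) / (1 - x * y c) := by
    have h0 : ∏ c, (x - y c) / (1 - x * y c) = (∏ c, (1 - x⁻¹ * y c)) / ∏ c, (x⁻¹ - y c) := by
      rw [← Finset.prod_div_distrib]
      refine Finset.prod_congr rfl fun c _ => ?_
      have h1 := sub_ne_zero.2 (hxy c).symm
      have h2 := sub_ne_zero.2 (hxi c)
      rw [div_eq_div_iff h1 h2]
      field_simp
    have : ∏ c, (x⁻¹ - y c) ≠ 0 := Finset.prod_ne_zero_iff.2 fun c _ => sub_ne_zero.2 (hxi c)
    rw [h0]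
    have h3 := sub_ne_zero.2 hi1
    have h4 := sub_ne_zero.2 hi2
    generalize ∏ c, (x⁻¹ - y c) = Q at *
    generalize ∏ c, (1 - x⁻¹ * y c) = Q' at *
    have h5 : x - x⁻¹ = - x * ((x⁻¹ - 1) * (x⁻¹ - -1)) := by field_simp; ring
    rw [h5, div_eq_iff (mul_ne_zero h3 (mul_ne_zero h4 this))]
    rw [div_eq_mul_inv]
    linear_combination (x * (x⁻¹ - 1) * (x⁻¹ - -1) * Q') * (mul_inv_cancel₀ this)
  have n4 : ∀ b, (x - y b) * (∏ c, (1 - y b * y c)) /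
      ((y b - 1) * ((y b - -1) * ((y b - x⁻¹) * ∏ c, if c = b then 1 else y b - y c)))
      = x * ((x - y b) / (1 - x * y b) * (∏ c, if c = b then 1 else (y b - y c) / (1 - y b * y c))⁻¹) := by
    intro b
    have h0 : (∏ c, (1 - y b * y c)) = (1 - y b * y b) * ∏ c, if c = b then 1 else 1 - y b * y c := by
      rw [← Finset.mul_prod_erase Finset.univ _ (Finset.mem_univ b)]
      rw [← Finset.mul_prod_erase Finset.univ (fun c => if c = b then 1 else 1 - y b * y c) (Finset.mem_univ b)]
      simp only [if_true, one_mul]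
      congr 1
      refine Finset.prod_congr rfl fun j hj => ?_
      rw [if_neg (Finset.ne_of_mem_erase hj)]
    have h1 : (∏ c, if c = b then 1 else (y b - y c) / (1 - y b * y c)) =
      (∏ c, if c = b then 1 else (y b - y c)) / ∏ c, if c = b then 1 else (1 - y b * y c) := by
      rw [← Finset.prod_div_distrib]
      refine Finset.prod_congr rfl fun c _ => ?_
      split_ifs <;> simp
    have h2 : (∏ c, if c = b then 1 else (y b - y c)) ≠ 0 := by
      refine Finset.prod_ne_zero_iff.2 fun c _ => ?_
      split_ifs with h
      · simp
      · exact sub_ne_zero.2 fun h' => h (hy h').symm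
    have h3 : (∏ c, if c = b then 1 else (1 - y b * y c)) ≠ 0 := by
      refine Finset.prod_ne_zero_iff.2 fun c _ => ?_
      split_ifs with h
      · simp
      · exact sub_ne_zero.2 (hyy b c).symm
    rw [h0, h1]
    have h4 := sub_ne_zero.2 (hy1 b)
    have h5 := sub_ne_zero.2 (hy2 b)
    have h6 := sub_ne_zero.2 (hxi b).symm
    have h7 := sub_ne_zero.2 (hxy b).symm
    have h8 : y b - x⁻¹ = - ((1 - x * y b) / x) := by field_simp; ring
    rw [h8]
    have h9 : 1 - y b * y b = - ((y b - 1) * (y b - -1)) := by ring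
    rw [h9]
    field_simp
  simp only [one_mul] at n1
  rw [n1, n2, n3] at key
  simp only [n4] at key
  rw [← Finset.mul_sum] at key
  apply mul_left_cancel₀ hx0
  linear_combination -key

universe u

theorem even_generic {L : Type*} [Field L] [CharZero L] (n : ℕ) : ∀ (x : Fin (2 * n) → L)
    (_ : Function.Injective x) (_ : ∀ i, x i ≠ 0) (_ : ∀ i j, x i * x j ≠ 1),
    pfT n (fun i j => (x i - x j) / (1 - x i * x j)) =
      2 ^ n * (n.factorial : L) * prP (fun i j => (x i - x j) / (1 - x i * x j)) := by
  induction n with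
  | zero =>
    intro x _ _ _
    have : ∀ A : Fin (2 * 0) → Fin (2 * 0) → L, prP A = 1 := by
      intro A; unfold prP; exact Finset.prod_eq_one fun i _ => absurd i.2 (by omega)
    rw [this]
    have : ∀ A : Fin (2 * 0) → Fin (2 * 0) → L, pfT 0 A = 1 := by
      intro A
      unfold pfT
      rw [Fintype.sum_eq_single 1]
      · simp
      · intro σ hσ; exact absurd (Equiv.ext fun i => absurd i.2 (by omega)) hσ
    rw [this]; simp
  | succ n ih =>
    intro x hx h0 h1
    rw [pfT_succ]
    have hskew : ∀ i j, (x i - x j) / (1 - x i * x j) = - ((x j - x i) / (1 - x j * x i)) := by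
      intro i j
      rw [mul_comm (x j), ← neg_div, neg_sub]
    have hrow : ∀ a : Fin (2 * n + 1 + 1), ∑ b : Fin (2 * n + 1),
      (-1) ^ (a : ℕ) * ((-1) ^ (b : ℕ) * ((x a - x (a.succAbove b)) / (1 - x a * x (a.succAbove b)) *
        pfT n (fun i j => (x (a.succAbove (b.succAbove i)) - x (a.succAbove (b.succAbove j))) /
          (1 - x (a.succAbove (b.succAbove i)) * x (a.succAbove (b.succAbove j))))))
        = 2 ^ n * (n.factorial : L) *
          prP (N := 2 * n + 1 + 1) (fun i j => (x i - x j) / (1 - x i * x j)) := by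
      intro a
      set y : Fin (2 * n + 1) → L := fun b => x (a.succAbove b) with hy
      have hyinj : Function.Injective y := hx.comp Fin.succAbove_right_injective
      have R := row_identity (2 * n + 1) ⟨n, rfl⟩ (x a) y hyinj (h0 a) (h1 a a)
        (fun c => h1 _ _) (fun b c => h1 _ _)
      rw [prP_delete (N := 2 * n + 1) _ hskew a]
      change _ = _ * (_ * (∏ c, (x a - y c) / (1 - x a * y c)) * prP (fun i j => (y i - y j) / (1 - y i * y j)))
      rw [← R, Finset.mul_sum, Finset.sum_mul, Finset.mul_sum]
      refine Finset.sum_congr rfl fun b _ => ?_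
      have hsy : ∀ i j, (y i - y j) / (1 - y i * y j) = - ((y j - y i) / (1 - y j * y i)) :=
        fun i j => hskew _ _
      rw [prP_delete (N := 2 * n) _ hsy b]
      have hih := ih (fun i => x (a.succAbove (b.succAbove i)))
        (hyinj.comp Fin.succAbove_right_injective) (fun i => h0 _) (fun i j => h1 _ _)
      rw [hih]
      have hpr : (∏ c, if c = b then 1 else (y b - y c) / (1 - y b * y c)) =
          ∏ c, (y b - y (b.succAbove c)) / (1 - y b * y (b.succAbove c)) := by
        rw [Fin.prod_univ_succAbove _ b]
        simp [Fin.succAbove_ne]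
      rw [hpr]
      have hne : ∏ c, (y b - y (b.succAbove c)) / (1 - y b * y (b.succAbove c)) ≠ 0 := by
        refine Finset.prod_ne_zero_iff.2 fun c _ => div_ne_zero ?_ ?_
        · exact sub_ne_zero.2 fun h => Fin.succAbove_ne b c (hyinj h).symm
        · exact sub_ne_zero.2 (h1 _ _).symm
      change (-1) ^ (a : ℕ) * ((-1) ^ (b : ℕ) * ((x a - y b) / (1 - x a * y b) *
        (2 ^ n * (n.factorial : L) * prP (fun i j => (y (b.succAbove i) - y (b.succAbove j)) /
          (1 - y (b.succAbove i) * y (b.succAbove j)))))) = _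
      generalize prP (fun i j => (y (b.succAbove i) - y (b.succAbove j)) /
          (1 - y (b.succAbove i) * y (b.succAbove j))) = Z
      generalize (∏ c, (y b - y (b.succAbove c)) / (1 - y b * y (b.succAbove c))) = W at *
      generalize (x a - y b) / (1 - x a * y b) = V
      linear_combination (-(-1) ^ (a : ℕ) * (-1) ^ (b : ℕ) * V * 2 ^ n * (n.factorial : L) * Z) *
        (mul_inv_cancel₀ hne)
    refine (Finset.sum_congr rfl fun a _ => hrow a).trans ?_
    rw [Finset.sum_const, Finset.card_univ, Fintype.card_fin, nsmul_eq_mul, Nat.factorial_succ]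
    push_cast
    change _ = _ * prP (N := 2 * n + 1 + 1) (fun i j => (x i - x j) / (1 - x i * x j))
    generalize prP (N := 2 * n + 1 + 1) (fun i j => (x i - x j) / (1 - x i * x j)) = Z
    ring

theorem exists_generic {K : Type u} [Field K] [CharZero K] (m : ℕ) (x : Fin m → K)
    (hx : ∀ i j, i ≠ j → 1 - x i * x j ≠ 0) :
    ∃ (L R : Type u) (_ : Field L) (_ : CharZero L) (_ : CommRing R) (f : R →+* L) (g : R →+* K)
      (s : Fin m → Fin m → R) (X : Fin m → L), Function.Injective f ∧ Function.Injective X ∧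
      (∀ i, X i ≠ 0) ∧ (∀ i j, X i * X j ≠ 1) ∧ (∀ i, 1 + X i ≠ 0) ∧
      (∀ i j, f (s i j) = (X i - X j) / (1 - X i * X j)) ∧
      (∀ i j, g (s i j) = (x i - x j) / (1 - x i * x j)) := by
  classical
  let Q := MvPolynomial (Fin m) K
  let e : Q →+* K := MvPolynomial.eval x
  let M : Submonoid Q := (nonZeroDivisors K).comap e
  have hM : ∀ y : M, IsUnit (e y) := fun y =>
    isUnit_iff_ne_zero.2 (nonZeroDivisors.ne_zero y.2)
  have hM0 : ∀ y : M, (y : Q) ≠ 0 := by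
    intro y h
    exact (hM y).ne_zero (by rw [h, map_zero])
  have hM' : ∀ y : M, IsUnit (algebraMap Q (FractionRing Q) y) := fun y =>
    isUnit_iff_ne_zero.2 (by
      rw [Ne, FaithfulSMul.algebraMap_eq_zero_iff]; exact hM0 y)
  have hD : ∀ i j : Fin m, i ≠ j → (1 - MvPolynomial.X i * MvPolynomial.X j : Q) ∈ M := by
    intro i j hij
    change e _ ∈ nonZeroDivisors K
    rw [mem_nonZeroDivisors_iff_ne_zero]
    have := hx i j hij
    simp only [e, map_sub, map_mul, map_one]
    rw [MvPolynomial.eval_X, MvPolynomial.eval_X]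
    exact this
  let s : Fin m → Fin m → Localization M := fun i j =>
    if h : i = j then 0 else
      IsLocalization.mk' (Localization M) (MvPolynomial.X i - MvPolynomial.X j : Q)
        (⟨_, hD i j h⟩ : M)
  have hinj : Function.Injective (algebraMap Q (FractionRing Q)) := FaithfulSMul.algebraMap_injective _ _
  have hX1 : ∀ i j : Fin m, (MvPolynomial.X i * MvPolynomial.X j : Q) ≠ 1 := by
    intro i j h
    have := congrArg (MvPolynomial.eval (0 : Fin m → K)) h
    simp at this
  have hX2 : ∀ i j : Fin m, algebraMap Q (FractionRing Q) (MvPolynomial.X i) *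
      algebraMap Q (FractionRing Q) (MvPolynomial.X j) ≠ 1 := by
    intro i j h
    rw [← map_mul, ← map_one (algebraMap Q (FractionRing Q))] at h
    exact hX1 i j (hinj h)
  refine ⟨FractionRing Q, Localization M, inferInstance, ?_, inferInstance,
    IsLocalization.lift hM', IsLocalization.lift hM, s,
    fun i => algebraMap Q (FractionRing Q) (MvPolynomial.X i), ?_, ?_, ?_, ?_, ?_, ?_, ?_⟩
  · exact charZero_of_injective_algebraMap hinj
  · rw [IsLocalization.lift_injective_iff]
    intro a b
    constructor
    · intro h
      have := congrArg (IsLocalization.lift hM' : Localization M →+* _) h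
      simpa using this
    · intro h; rw [hinj h]
  · exact hinj.comp (MvPolynomial.X_injective)
  · intro i h
    rw [FaithfulSMul.algebraMap_eq_zero_iff] at h
    exact MvPolynomial.X_ne_zero i h
  · exact hX2
  · intro i h
    have h2 := eq_neg_of_add_eq_zero_right h
    exact hX2 i i (by dsimp only at h2; rw [h2]; ring)
  · intro i j
    by_cases h : i = j
    · subst h; simp [s]
    · simp only [s, dif_neg h]
      rw [IsLocalization.lift_mk'_spec]
      have : (1 : FractionRing Q) - algebraMap Q (FractionRing Q) (MvPolynomial.X i) *
        algebraMap Q (FractionRing Q) (MvPolynomial.X j) ≠ 0 := sub_ne_zero.2 (hX2 i j).symm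
      simp only [map_sub, map_mul, map_one]
      rw [mul_div_cancel₀ _ this]
  · intro i j
    by_cases h : i = j
    · subst h; simp [s]
    · simp only [s, dif_neg h]
      rw [IsLocalization.lift_mk'_spec]
      simp only [map_sub, map_mul, map_one, e]
      rw [MvPolynomial.eval_X, MvPolynomial.eval_X]
      rw [mul_div_cancel₀ _ (hx i j h)]

theorem pfT_map {R S : Type*} [CommRing R] [CommRing S] (f : R →+* S) (n : ℕ)
    (A : Fin (2 * n) → Fin (2 * n) → R) : f (pfT n A) = pfT n (fun i j => f (A i j)) := by
  simp [pfT, map_sum, map_prod]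

theorem prP_map {R S : Type*} [CommRing R] [CommRing S] (f : R →+* S) {N : ℕ}
    (A : Fin N → Fin N → R) : f (prP A) = prP (fun i j => f (A i j)) := by
  simp [prP, map_prod, apply_ite f]

theorem even_case {K : Type*} [Field K] [CharZero K] (n : ℕ) (x : Fin (2 * n) → K)
    (hx : ∀ i j, i ≠ j → 1 - x i * x j ≠ 0) :
    pfT n (fun i j => (x i - x j) / (1 - x i * x j)) =
      2 ^ n * (n.factorial : K) * prP (fun i j => (x i - x j) / (1 - x i * x j)) := by
  obtain ⟨L, R, _, _, _, f, g, s, X, hf, hX, hX0, hX1, -, hfs, hgs⟩ := exists_generic _ x hx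
  have h := even_generic n X hX hX0 hX1
  have h2 : pfT n s = 2 ^ n * (n.factorial : R) * prP s := by
    apply hf
    simp only [map_mul, map_pow, map_ofNat, map_natCast, pfT_map, prP_map, hfs]
    exact h
  have h3 := congrArg g h2
  simp only [map_mul, map_pow, map_ofNat, map_natCast, pfT_map, prP_map, hgs] at h3
  exact h3

/-- Bordered matrix. -/
def bord {R : Type*} [CommRing R] {n : ℕ} (s : Fin (2 * n - 1) → Fin (2 * n - 1) → R)
    (i j : Fin (2 * n)) : R :=
  if hi : i.1 < 2 * n - 1 then
    (if hj : j.1 < 2 * n - 1 then s ⟨i.1, hi⟩ ⟨j.1, hj⟩ else 1)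
  else (if j.1 < 2 * n - 1 then -1 else 0)

theorem bord_map {R S : Type*} [CommRing R] [CommRing S] (f : R →+* S) {n : ℕ}
    (s : Fin (2 * n - 1) → Fin (2 * n - 1) → R) (i j : Fin (2 * n)) :
    f (bord s i j) = bord (fun i j => f (s i j)) i j := by
  unfold bord
  split_ifs <;> simp

theorem prP_bord {R : Type*} [CommRing R] (k : ℕ)
    (s : Fin (2 * (k + 1) - 1) → Fin (2 * (k + 1) - 1) → R) :
    prP (bord s) = prP s := by
  change prP (N := 2 * k + 1 + 1) (bord s) = prP (N := 2 * k + 1) s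
  unfold prP
  rw [Fin.prod_univ_castSucc]
  have h1 : (∏ j : Fin (2 * k + 1 + 1), if Fin.last (2 * k + 1) < j then
      bord (n := k + 1) s (Fin.last (2 * k + 1)) j else 1) = 1 := by
    refine Finset.prod_eq_one fun j _ => ?_
    rw [if_neg (not_lt.2 (Fin.le_last j))]
  rw [h1, mul_one]
  refine Finset.prod_congr rfl fun i _ => ?_
  rw [Fin.prod_univ_castSucc]
  have h2 : bord (n := k + 1) s (Fin.castSucc i) (Fin.last (2 * k + 1)) = 1 := by
    unfold bord
    have hi := i.2
    rw [dif_pos (by simp; omega), dif_neg (by simp; omega)]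
  rw [h2, ite_self, mul_one]
  refine Finset.prod_congr rfl fun j _ => ?_
  have h3 : bord (n := k + 1) s (Fin.castSucc i) (Fin.castSucc j) = s i j := by
    unfold bord
    have hi := i.2
    have hj := j.2
    rw [dif_pos (by simp; omega), dif_pos (by simp; omega)]
    rfl
  rw [h3]
  rfl

theorem odd_generic {L : Type*} [Field L] [CharZero L] (k : ℕ) (X : Fin (2 * (k + 1) - 1) → L)
    (h1 : ∀ i j, X i * X j ≠ 1) (h2 : ∀ i, 1 + X i ≠ 0) :
    pfT (k + 1) (bord fun i j => (X i - X j) / (1 - X i * X j)) =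
      2 ^ (k + 1) * ((k + 1).factorial : L) * prP (fun i j => (X i - X j) / (1 - X i * X j)) := by
  rw [← prP_bord]
  let Y : Fin (2 * (k + 1)) → L := fun i => if hi : i.1 < 2 * (k + 1) - 1 then X ⟨i.1, hi⟩ else -1
  have hB : (bord fun i j => (X i - X j) / (1 - X i * X j)) =
      fun i j => (Y i - Y j) / (1 - Y i * Y j) := by
    funext i j
    simp only [bord, Y]
    split_ifs with hi hj hj
    · rfl
    · have := h2 ⟨i, hi⟩
      rw [eq_div_iff (by intro h; apply this; linear_combination h)]
      ring
    · have := h2 ⟨j, hj⟩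
      rw [eq_div_iff (by intro h; apply this; linear_combination h)]
      ring
    · simp
  rw [hB]
  apply even_case
  intro i j hij
  simp only [Y]
  split_ifs with hi hj hj
  · exact sub_ne_zero.2 (h1 _ _).symm
  · intro h; apply h2 ⟨i, hi⟩; linear_combination h
  · intro h; apply h2 ⟨j, hj⟩; linear_combination h
  · exact absurd (Fin.ext (by omega)) hij

theorem odd_case {K : Type*} [Field K] [CharZero K] (k : ℕ) (x : Fin (2 * (k + 1) - 1) → K)
    (hx : ∀ i j, i ≠ j → 1 - x i * x j ≠ 0) :
    pfT (k + 1) (bord fun i j => (x i - x j) / (1 - x i * x j)) =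
      2 ^ (k + 1) * ((k + 1).factorial : K) * prP (fun i j => (x i - x j) / (1 - x i * x j)) := by
  obtain ⟨L, R, _, _, _, f, g, s, X, hf, hX, hX0, hX1, hX2, hfs, hgs⟩ := exists_generic _ x hx
  have h := odd_generic k X hX1 hX2
  have h2 : pfT (k + 1) (bord s) = 2 ^ (k + 1) * ((k + 1).factorial : R) * prP s := by
    apply hf
    simp only [map_mul, map_pow, map_ofNat, map_natCast, pfT_map, prP_map, bord_map, hfs]
    exact h
  have h3 := congrArg g h2
  simp only [map_mul, map_pow, map_ofNat, map_natCast, pfT_map, prP_map, bord_map, hgs] at h3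
  exact h3

/-- Stembridge's Pfaffian identity (odd case): for `2n-1` variables,
`∏_{i<j} (x_i - x_j)/(1 - x_i x_j)` equals the Pfaffian of the `2n × 2n` matrix whose
top-left `(2n-1) × (2n-1)` block has entries `S(x_i, x_j)`, whose last column is the
all-ones vector (with last entry `0`), and whose last row is minus the all-ones vector. -/
theorem stembridge_pfaffian_odd {K : Type*} [Field K] [CharZero K] (n : ℕ) (hn : 1 ≤ n)
    (x : Fin (2 * n - 1) → K) (hx : ∀ i j, i ≠ j → 1 - x i * x j ≠ 0) :
    (∏ i : Fin (2 * n - 1), ∏ j ∈ Finset.Ioi i, (x i - x j) / (1 - x i * x j))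
      = pf n (Matrix.of fun i j : Fin (2 * n) =>
          if hi : i.1 < 2 * n - 1 then
            (if hj : j.1 < 2 * n - 1 then
              (x ⟨i.1, hi⟩ - x ⟨j.1, hj⟩) / (1 - x ⟨i.1, hi⟩ * x ⟨j.1, hj⟩)
            else 1)
          else (if j.1 < 2 * n - 1 then -1 else 0)) := by
  obtain ⟨k, rfl⟩ : ∃ k, n = k + 1 := ⟨n - 1, by omega⟩
  have h := odd_case k x hx
  have hP : (∏ i : Fin (2 * (k + 1) - 1), ∏ j ∈ Finset.Ioi i, (x i - x j) / (1 - x i * x j))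
      = prP (fun i j => (x i - x j) / (1 - x i * x j)) := by
    unfold prP
    refine Finset.prod_congr rfl fun i _ => ?_
    rw [← Finset.prod_filter]
    refine Finset.prod_congr ?_ fun _ _ => rfl
    ext j
    simp
  rw [hP]
  have h0 : (2 : K) ^ (k + 1) * ((k + 1).factorial : K) ≠ 0 :=
    mul_ne_zero (pow_ne_zero _ two_ne_zero) (Nat.cast_ne_zero.2 (Nat.factorial_ne_zero _))
  unfold pf
  rw [eq_div_iff h0, mul_comm]
  exact h.symm
end

section
/- Double summation identity for the TASEP kernel against Pochhammer polynomials: define Θ_i(x) = binom(x+i-2, x-1) for x ≥ 1 and i ≥ 1, and Q_{k,ℓ}(x,y) = α² (1/2πi)² ∮∮ [(u-w)/(1-u-w)]·[w^{k-x} e^{t(w-1)}/((w-α)(w-1)^k)]·[u^{ℓ-y} e^{t(u-1)}/((u-α)(u-1)^ℓ)] du dw with both contours circles of radius R > 1 around the origin enclosing 1, α, 1-α. Then for all i, j ≥ 1, ∑_{x=1}^{∞} ∑_{y=1}^{∞} Θ_i(x) Q_{1,1}(x,y) Θ_j(y) = Q_{i+1,j+1}(1,1), with both iterated series converging absolutely.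 -/
open Complex

/-- `Θ_i(x) = C(x + i - 2, x - 1)` for positive integers `x`, `i`. -/
noncomputable def ThetaBin (i x : ℕ) : ℝ := (Nat.choose (x + i - 2) (x - 1) : ℝ)

/-- The TASEP double-contour kernel `Q_{k,ℓ}(x,y)`, with both contours the circle of
radius `R` around the origin. -/
noncomputable def Qker (α t R : ℝ) (k ℓ : ℕ) (x y : ℤ) : ℂ :=
  (α : ℂ) ^ 2 * ((2 * Real.pi * Complex.I)⁻¹) ^ 2 *
    ∮ w in C(0, R), ∮ u in C(0, R),
      ((u - w) / (1 - u - w)) *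
        (w ^ ((k : ℤ) - x) * Complex.exp ((t : ℂ) * (w - 1)) /
          ((w - (α : ℂ)) * (w - 1) ^ k)) *
        (u ^ ((ℓ : ℤ) - y) * Complex.exp ((t : ℂ) * (u - 1)) /
          ((u - (α : ℂ)) * (u - 1) ^ ℓ))

open MeasureTheory

lemma abs_rpow_int (a b c : ℝ) : IntervalIntegrable (fun x : ℝ => |x - c| ^ (-(1/2) : ℝ)) volume a b := by
  have h : IntervalIntegrable (fun x : ℝ => |x| ^ (-(1/2) : ℝ)) volume (a - c) (b - c) := by
    have := (intervalIntegral.intervalIntegrable_cpow' (a := a - c) (b := b - c)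
      (r := ((-(1/2) : ℝ) : ℂ)) (by norm_num)).norm
    refine this.congr (fun x _ => ?_)
    rw [Complex.norm_cpow_real]
    simp
  simpa using h.comp_sub_right c

lemma cos_lower (θ₀ θ : ℝ) (h0 : 0 < θ₀) (h1 : θ₀ ≤ Real.pi / 2) (h2 : 0 ≤ θ) (h3 : θ ≤ Real.pi) :
    2 * θ₀ / Real.pi ^ 2 * |θ - θ₀| ≤ |Real.cos θ₀ - Real.cos θ| := by
  have hpi := Real.pi_pos
  rw [Real.cos_sub_cos, abs_mul, abs_mul]
  have a1 : 2 / Real.pi * |(θ₀ - θ) / 2| ≤ |Real.sin ((θ₀ - θ) / 2)| :=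
    Real.mul_abs_le_abs_sin (by rw [abs_le]; constructor <;> linarith)
  have a2 : θ₀ / Real.pi ≤ |Real.sin ((θ₀ + θ) / 2)| := by
    refine le_trans ?_ (le_abs_self _)
    rcases le_total ((θ₀ + θ) / 2) (Real.pi / 2) with h | h
    · have := Real.mul_le_sin (x := (θ₀ + θ) / 2) (by linarith) h
      refine le_trans ?_ this
      rw [div_mul_eq_mul_div]
      gcongr
      linarith
    · have := Real.mul_le_sin (x := Real.pi - (θ₀ + θ) / 2) (by linarith) (by linarith)
      rw [Real.sin_pi_sub] at this
      refine le_trans ?_ this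
      rw [div_mul_eq_mul_div]
      gcongr
      linarith
  have a3 := mul_le_mul a2 a1 (by positivity) (by positivity)
  rw [abs_div, abs_sub_comm θ₀ θ, abs_two] at a3
  rw [abs_neg, abs_two]
  calc _ = 2 * (θ₀ / Real.pi * (2 / Real.pi * (|θ - θ₀| / 2))) := by field_simp
    _ ≤ _ := by rw [mul_assoc 2]; gcongr

lemma exists_G (R : ℝ) (hR : 1 < R) : ∃ G : ℝ → ℝ,
    IntegrableOn G (Set.Ioc 0 (2 * Real.pi)) ∧ (∀ θ, 0 ≤ G θ) ∧
    ∀ᵐ θ ∂(volume.restrict (Set.Ioc 0 (2 * Real.pi))), 1 ≤ G θ ^ 2 * |1 - 2 * R * Real.cos θ| := by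
  have hpi := Real.pi_pos
  set θ₀ := Real.arccos (1 / (2 * R)) with hθ
  have hc : Real.cos θ₀ = 1 / (2 * R) := Real.cos_arccos
    (by have : 0 < 1 / (2 * R) := by positivity
        linarith) (by rw [div_le_one (by positivity)]; linarith)
  have h0 : 0 < θ₀ := Real.arccos_pos.2 (by rw [div_lt_one (by positivity)]; linarith)
  have h1 : θ₀ ≤ Real.pi / 2 := Real.arccos_le_pi_div_two.2 (by positivity)
  set c := 2 * R * (2 * θ₀ / Real.pi ^ 2) with hcdef
  have hcpos : 0 < c := by positivity
  have key : ∀ θ, 0 ≤ θ → θ ≤ Real.pi → c * |θ - θ₀| ≤ |1 - 2 * R * Real.cos θ| := by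
    intro θ h2 h3
    have := cos_lower θ₀ θ h0 h1 h2 h3
    have e : 1 - 2 * R * Real.cos θ = 2 * R * (Real.cos θ₀ - Real.cos θ) := by
      rw [hc]; field_simp
    rw [e, abs_mul, abs_of_pos (show 0 < 2 * R by positivity), hcdef, mul_assoc (2 * R)]
    gcongr
  have sq : ∀ x : ℝ, x ≠ 0 → (|x| ^ (-(1/2) : ℝ)) ^ 2 * |x| = 1 := by
    intro x hx
    have hx' := abs_pos.2 hx
    rw [← Real.rpow_natCast, ← Real.rpow_mul hx'.le]
    norm_num
    rw [Real.rpow_neg_one]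
    field_simp
  refine ⟨fun θ => (√c)⁻¹ * (|θ - θ₀| ^ (-(1/2) : ℝ) + |θ - (2 * Real.pi - θ₀)| ^ (-(1/2) : ℝ)),
    ?_, fun θ => by positivity, ?_⟩
  · rw [← intervalIntegrable_iff_integrableOn_Ioc_of_le (by positivity)]
    exact ((abs_rpow_int _ _ _).add (abs_rpow_int _ _ _)).const_mul _
  · have n1 : ∀ᵐ θ ∂(volume.restrict (Set.Ioc 0 (2 * Real.pi))), θ ≠ θ₀ := Measure.ae_ne _ _
    have n2 : ∀ᵐ θ ∂(volume.restrict (Set.Ioc 0 (2 * Real.pi))), θ ≠ 2 * Real.pi - θ₀ :=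
      Measure.ae_ne _ _
    filter_upwards [n1, n2, ae_restrict_mem measurableSet_Ioc] with θ m1 m2 hθm
    have gen : ∀ a b x: ℝ, 0 ≤ a → 0 ≤ b → x ≠ 0 → b = |x| ^ (-(1/2) : ℝ) →
        c * |x| ≤ |1 - 2 * R * Real.cos θ| →
        1 ≤ ((√c)⁻¹ * (a + b)) ^ 2 * |1 - 2 * R * Real.cos θ| := by
      intro a b x ha hb hx hbx hle
      calc (1 : ℝ) = ((√c)⁻¹ * b) ^ 2 * (c * |x|) := by
            rw [mul_pow, inv_pow, Real.sq_sqrt hcpos.le]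
            have := sq x hx
            rw [← hbx] at this
            field_simp
            linarith
        _ ≤ _ := by gcongr; linarith
    rcases le_total θ Real.pi with h | h
    · rw [add_comm]
      exact gen _ _ (θ - θ₀) (by positivity) (by positivity) (sub_ne_zero.2 m1) rfl
        (key θ hθm.1.le h)
    · refine gen _ _ (θ - (2 * Real.pi - θ₀)) (by positivity) (by positivity) (sub_ne_zero.2 m2) rfl ?_
      have := key (2 * Real.pi - θ) (by linarith [hθm.2]) (by linarith)
      rw [Real.cos_two_pi_sub] at this
      rwa [show |θ - (2 * Real.pi - θ₀)| = |2 * Real.pi - θ - θ₀| by rw [abs_sub_comm]; congr 1; ring]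

lemma denom_lower (R : ℝ) (hR : 1 < R) (θ φ : ℝ) :
    |1 - 2 * R * Real.cos θ| ≤ (2 * R + 1) * ‖1 - circleMap 0 R φ - circleMap 0 R θ‖ := by
  set w := circleMap 0 R θ with hw
  set u := circleMap 0 R φ with hu
  have nu : ‖u‖ = R := by rw [hu, norm_circleMap_zero, abs_of_pos (by linarith)]
  have nw : ‖w‖ = R := by rw [hw, norm_circleMap_zero, abs_of_pos (by linarith)]
  have e : ‖1 - w‖ ^ 2 - R ^ 2 = 1 - 2 * R * Real.cos θ := by
    have h1 : w.re = R * Real.cos θ := by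
      simp [hw, circleMap, Complex.exp_re]
    have h2 : w.im = R * Real.sin θ := by
      simp [hw, circleMap, Complex.exp_im]
    rw [← Complex.normSq_eq_norm_sq, Complex.normSq_apply]
    simp only [sub_re, one_re, sub_im, one_im, h1, h2]
    nlinarith [Real.sin_sq_add_cos_sq θ]
  rw [← e, show ‖1 - w‖ ^ 2 - R ^ 2 = (‖1 - w‖ + R) * (‖1 - w‖ - R) by ring, abs_mul,
    abs_of_nonneg (by positivity)]
  have b1 : ‖1 - w‖ ≤ 1 + R := by
    have := norm_sub_le (1 : ℂ) w
    rwa [norm_one, nw] at this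
  have b2 : |‖1 - w‖ - R| ≤ ‖1 - u - w‖ := by
    have := abs_norm_sub_norm_le (1 - w) u
    rwa [nu, show 1 - w - u = 1 - u - w by ring] at this
  exact mul_le_mul (by linarith) b2 (abs_nonneg _) (by positivity)

/-- The singular factor on the torus. -/
noncomputable def rho (R : ℝ) (p : ℝ × ℝ) : ℂ :=
  (circleMap 0 R p.2 - circleMap 0 R p.1) / (1 - circleMap 0 R p.2 - circleMap 0 R p.1)

/-- Lebesgue measure on the period interval. -/
noncomputable def mu0 : Measure ℝ := volume.restrict (Set.Ioc 0 (2 * Real.pi))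

instance : IsFiniteMeasure mu0 := by unfold mu0; infer_instance

lemma rho_int (R : ℝ) (hR : 1 < R) (f g : ℝ → ℂ) (hf : Continuous f) (hg : Continuous g) :
    Integrable (fun p : ℝ × ℝ => rho R p * (f p.1 * g p.2)) (mu0.prod mu0) := by
  obtain ⟨G, hG, hG0, hG1⟩ := exists_G R hR
  have hpi := Real.pi_pos
  have aux : ∀ f : ℝ → ℂ, Continuous f → Integrable (fun θ => G θ * ‖f θ‖) mu0 := by
    intro f hf
    have hG' : IntervalIntegrable G volume 0 (2 * Real.pi) := by
      rwa [intervalIntegrable_iff_integrableOn_Ioc_of_le (by positivity)]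
    have := hG'.mul_continuousOn (g := fun θ => ‖f θ‖) hf.norm.continuousOn
    rwa [intervalIntegrable_iff_integrableOn_Ioc_of_le (by positivity)] at this
  have dom := (((aux f hf).mul_prod (aux g hg)).const_mul (2 * R * (2 * R + 1)))
  refine dom.mono' ?_ ?_
  · have m1 : Measurable (fun p : ℝ × ℝ => circleMap 0 R p.1) :=
      (continuous_circleMap 0 R).measurable.comp measurable_fst
    have m2 : Measurable (fun p : ℝ × ℝ => circleMap 0 R p.2) :=
      (continuous_circleMap 0 R).measurable.comp measurable_snd
    have m3 : Measurable (fun p : ℝ × ℝ => f p.1) := hf.measurable.comp measurable_fst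
    have m4 : Measurable (fun p : ℝ × ℝ => g p.2) := hg.measurable.comp measurable_snd
    exact (((m2.sub m1).div ((measurable_const.sub m2).sub m1)).mul
      (m3.mul m4)).aestronglyMeasurable
  · have a1 : ∀ᵐ p ∂(mu0.prod mu0), 1 ≤ G p.1 ^ 2 * |1 - 2 * R * Real.cos p.1| :=
      Measure.quasiMeasurePreserving_fst.ae hG1
    have a2 : ∀ᵐ p ∂(mu0.prod mu0), 1 ≤ G p.2 ^ 2 * |1 - 2 * R * Real.cos p.2| :=
      Measure.quasiMeasurePreserving_snd.ae hG1
    filter_upwards [a1, a2] with p h1 h2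
    have l1 := denom_lower R hR p.1 p.2
    have l2 := denom_lower R hR p.2 p.1
    rw [show 1 - circleMap 0 R p.1 - circleMap 0 R p.2 =
      1 - circleMap 0 R p.2 - circleMap 0 R p.1 by ring] at l2
    set D := ‖1 - circleMap 0 R p.2 - circleMap 0 R p.1‖ with hD
    have hD0 : 0 ≤ D := norm_nonneg _
    have k1 : 1 ≤ G p.1 ^ 2 * ((2 * R + 1) * D) := h1.trans (by gcongr)
    have k2 : 1 ≤ G p.2 ^ 2 * ((2 * R + 1) * D) := h2.trans (by gcongr)
    have k3 : 1 ≤ (G p.1 * G p.2 * ((2 * R + 1) * D)) ^ 2 := by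
      have := one_le_mul_of_one_le_of_one_le k1 k2
      linarith
    have p1 := hG0 p.1
    have p2 := hG0 p.2
    have k4 : 1 ≤ G p.1 * G p.2 * ((2 * R + 1) * D) := by
      by_contra! hlt
      have : 0 ≤ G p.1 * G p.2 * ((2 * R + 1) * D) := by positivity
      nlinarith
    have hDpos : 0 < D := by
      rcases hD0.eq_or_lt with h | h
      · rw [← h] at k4; norm_num at k4
      · exact h
    have hnum : ‖circleMap 0 R p.2 - circleMap 0 R p.1‖ ≤ 2 * R := by
      refine (norm_sub_le _ _).trans ?_
      rw [norm_circleMap_zero, norm_circleMap_zero, abs_of_pos (by linarith)]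
      linarith
    have hr : ‖rho R p‖ ≤ 2 * R * (2 * R + 1) * (G p.1 * G p.2) := by
      rw [rho, norm_div, ← hD, div_le_iff₀ hDpos]
      calc _ ≤ 2 * R * 1 := by linarith
        _ ≤ 2 * R * (G p.1 * G p.2 * ((2 * R + 1) * D)) := by gcongr
        _ = _ := by ring
    rw [norm_mul, norm_mul]
    calc _ ≤ 2 * R * (2 * R + 1) * (G p.1 * G p.2) * (‖f p.1‖ * ‖g p.2‖) := by gcongr
      _ = _ := by ring

/-- One-variable factor. -/
noncomputable def HH (α t R : ℝ) (k : ℕ) (x : ℤ) (θ : ℝ) : ℂ :=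
  deriv (circleMap 0 R) θ * (circleMap 0 R θ ^ ((k : ℤ) - x) *
    Complex.exp ((t : ℂ) * (circleMap 0 R θ - 1)) /
          ((circleMap 0 R θ - (α : ℂ)) * (circleMap 0 R θ - 1) ^ k))

lemma circ_ne (R : ℝ) (hR : 1 < R) (a : ℝ) (h0 : 0 ≤ a) (h1 : a ≤ 1) (θ : ℝ) :
    circleMap 0 R θ - (a : ℂ) ≠ 0 := by
  intro h
  have := congrArg norm (sub_eq_zero.1 h)
  rw [norm_circleMap_zero, abs_of_pos (by linarith), Complex.norm_real, Real.norm_eq_abs,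
    abs_of_nonneg h0] at this
  linarith

lemma HH_cont (α t R : ℝ) (hα0 : 0 < α) (hα1 : α < 1) (hR : 1 < R) (k : ℕ) (x : ℤ) :
    Continuous (HH α t R k x) := by
  have hc := continuous_circleMap 0 R
  have h0 : ∀ θ, circleMap 0 R θ ≠ 0 := fun θ => by
    simpa using circ_ne R hR 0 le_rfl zero_le_one θ
  have h1 : ∀ θ, circleMap 0 R θ - 1 ≠ 0 := fun θ => by
    simpa using circ_ne R hR 1 zero_le_one le_rfl θ
  have ha := circ_ne R hR α hα0.le hα1.le
  unfold HH
  simp only [deriv_circleMap]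
  refine (by fun_prop : Continuous fun θ => circleMap 0 R θ * I).mul (Continuous.div ?_ ?_ ?_)
  · exact (hc.zpow₀ _ (fun θ => Or.inl (h0 θ))).mul (by fun_prop)
  · fun_prop
  · intro θ
    exact mul_ne_zero (ha θ) (pow_ne_zero _ (h1 θ))

lemma Qker_eq (α t R : ℝ) (hα0 : 0 < α) (hα1 : α < 1) (hR : 1 < R) (k l : ℕ) (x y : ℤ) :
    Qker α t R k l x y = (α : ℂ) ^ 2 * ((2 * Real.pi * Complex.I)⁻¹) ^ 2 *
      ∫ p, rho R p * (HH α t R k x p.1 * HH α t R l y p.2) ∂(mu0.prod mu0) := by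
  have hpi := Real.pi_pos
  unfold Qker
  congr 1
  rw [integral_prod _ (rho_int R hR _ _ (HH_cont α t R hα0 hα1 hR k x)
    (HH_cont α t R hα0 hα1 hR l y))]
  unfold circleIntegral
  rw [intervalIntegral.integral_of_le (by positivity)]
  refine integral_congr_ae (Filter.Eventually.of_forall fun θ => ?_)
  simp only
  rw [intervalIntegral.integral_of_le (by positivity), smul_eq_mul, ← integral_const_mul]
  refine integral_congr_ae (Filter.Eventually.of_forall fun φ => ?_)
  simp only [smul_eq_mul, rho, HH]
  ring

lemma HH_shift (α t R : ℝ) (hR : 1 < R) (m : ℕ) (θ : ℝ) :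
    HH α t R 1 ((m : ℤ) + 1) θ = HH α t R 1 1 θ * ((circleMap 0 R θ)⁻¹) ^ m := by
  unfold HH
  have : ((1 : ℕ) : ℤ) - ((m : ℤ) + 1) = -(m : ℤ) := by push_cast; ring
  rw [this, zpow_neg, zpow_natCast]
  simp
  ring

lemma HH_sum (α t R : ℝ) (hR : 1 < R) (i : ℕ) (θ : ℝ) :
    HH α t R (i + 1) 1 θ = HH α t R 1 1 θ * (1 / (1 - (circleMap 0 R θ)⁻¹) ^ i) := by
  have h0 : circleMap 0 R θ ≠ 0 := by
    simpa using circ_ne R hR 0 le_rfl zero_le_one θ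
  have h1 : circleMap 0 R θ - 1 ≠ 0 := by
    simpa using circ_ne R hR 1 zero_le_one le_rfl θ
  unfold HH
  have : ((i + 1 : ℕ) : ℤ) - 1 = (i : ℤ) := by push_cast; ring
  rw [this, zpow_natCast, show 1 - (circleMap 0 R θ)⁻¹ = (circleMap 0 R θ - 1) / circleMap 0 R θ by
    field_simp, div_pow, pow_succ]
  simp only [Nat.cast_one, sub_self, zpow_zero, pow_one, one_mul, one_div, inv_div]
  generalize circleMap 0 R θ - 1 = z at *
  simp only [div_eq_mul_inv, mul_inv]
  ring

lemma theta_eq (k m : ℕ) : ThetaBin (k + 1) (m + 1) = ((m + k).choose k : ℝ) := by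
  unfold ThetaBin
  rw [show m + 1 + (k + 1) - 2 = m + k by omega, show m + 1 - 1 = m by omega,
    Nat.choose_symm_add]

/-- double summation identity for the TASEP kernel against Pochhammer
polynomials: `∑_{x,y ≥ 1} Θ_i(x) Q_{1,1}(x,y) Θ_j(y) = Q_{i+1,j+1}(1,1)`, with
absolute convergence; the circles have radius `R > 1` and enclose `1`, `α`, `1-α`. -/
theorem theta_Q_double_sum (α t R : ℝ) (ht : 0 < t) (hα0 : 0 < α) (hα1 : α < 1)
    (hR : 1 < R) (i j : ℕ) (hi : 1 ≤ i) (hj : 1 ≤ j) :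
    Summable (fun p : ℕ × ℕ =>
      ‖(ThetaBin i (p.1 + 1) : ℂ) * Qker α t R 1 1 ((p.1 : ℤ) + 1) ((p.2 : ℤ) + 1) *
        (ThetaBin j (p.2 + 1) : ℂ)‖) ∧
    ∑' (x : ℕ) (y : ℕ),
        (ThetaBin i (x + 1) : ℂ) * Qker α t R 1 1 ((x : ℤ) + 1) ((y : ℤ) + 1) *
          (ThetaBin j (y + 1) : ℂ)
      = Qker α t R (i + 1) (j + 1) 1 1 := by
  obtain ⟨a, rfl⟩ : ∃ a, i = a + 1 := ⟨i - 1, by omega⟩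
  obtain ⟨b, rfl⟩ : ∃ b, j = b + 1 := ⟨j - 1, by omega⟩
  have hnorm : ∀ θ, ‖(circleMap 0 R θ)⁻¹‖ = R⁻¹ := fun θ => by
    rw [norm_inv, norm_circleMap_zero, abs_of_pos (by linarith)]
  have hRinv : R⁻¹ < 1 := inv_lt_one_of_one_lt₀ hR
  have hRpos : 0 < R⁻¹ := by positivity
  have hgeo : ∀ (k : ℕ) (θ : ℝ), HasSum (fun n : ℕ => (((n + k).choose k : ℕ) : ℂ) *
      ((circleMap 0 R θ)⁻¹) ^ n) (1 / (1 - (circleMap 0 R θ)⁻¹) ^ (k + 1)) := fun k θ =>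
    hasSum_choose_mul_geometric_of_norm_lt_one k (by rw [hnorm]; exact hRinv)
  have hs : ∀ k : ℕ, Summable (fun n : ℕ => (((n + k).choose k : ℕ) : ℝ) * R⁻¹ ^ n) := fun k =>
    summable_choose_mul_geometric_of_norm_lt_one k
      (by rw [Real.norm_eq_abs, abs_of_pos hRpos]; exact hRinv)
  have hs2 : Summable (fun q : ℕ × ℕ => ((((q.1 + a).choose a : ℕ) : ℝ) * R⁻¹ ^ q.1) *
      ((((q.2 + b).choose b : ℕ) : ℝ) * R⁻¹ ^ q.2)) :=
    (hs a).mul_of_nonneg (hs b) (fun n => by positivity) (fun n => by positivity)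
  obtain ⟨c, hc⟩ : ∃ c : ℂ, c = (α : ℂ) ^ 2 * ((2 * Real.pi * Complex.I)⁻¹) ^ 2 := ⟨_, rfl⟩
  have hH := HH_cont α t R hα0 hα1 hR 1 1
  obtain ⟨K, hK⟩ : ∃ K : ℝ × ℝ → ℂ, K = fun p => rho R p * (HH α t R 1 1 p.1 * HH α t R 1 1 p.2) :=
    ⟨_, rfl⟩
  obtain ⟨F, hF⟩ : ∃ F : ℕ × ℕ → ℝ × ℝ → ℂ, F = fun q p =>
    K p * (((((q.1 + a).choose a : ℕ) : ℂ) * ((circleMap 0 R p.1)⁻¹) ^ q.1) *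
      ((((q.2 + b).choose b : ℕ) : ℂ) * ((circleMap 0 R p.2)⁻¹) ^ q.2)) := ⟨_, rfl⟩
  have hFr : ∀ q p, F q p = ((((q.1 + a).choose a : ℕ) : ℂ) * (((q.2 + b).choose b : ℕ) : ℂ)) *
      (rho R p * (HH α t R 1 ((q.1 : ℤ) + 1) p.1 *
        HH α t R 1 ((q.2 : ℤ) + 1) p.2)) := by
    intro q p
    simp only [hF, hK, HH_shift α t R hR]
    ring
  have hFint : ∀ q, Integrable (F q) (mu0.prod mu0) := by
    intro q
    rw [funext (hFr q)]
    exact (rho_int R hR _ _ (HH_cont α t R hα0 hα1 hR _ _)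
      (HH_cont α t R hα0 hα1 hR _ _)).const_mul _
  have hFnorm : ∀ q p, ‖F q p‖ = ((((q.1 + a).choose a : ℕ) : ℝ) * R⁻¹ ^ q.1) *
      ((((q.2 + b).choose b : ℕ) : ℝ) * R⁻¹ ^ q.2) * ‖K p‖ := by
    intro q p
    simp only [hF, norm_mul, norm_pow, hnorm, Complex.norm_natCast]
    ring
  have hFs : Summable (fun q => ∫ p, ‖F q p‖ ∂(mu0.prod mu0)) := by
    simp only [hFnorm, integral_const_mul]
    exact hs2.mul_right _
  have hterm : ∀ q : ℕ × ℕ, (ThetaBin (a + 1) (q.1 + 1) : ℂ) *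
      Qker α t R 1 1 ((q.1 : ℤ) + 1) ((q.2 : ℤ) + 1) * (ThetaBin (b + 1) (q.2 + 1) : ℂ) =
      c * ∫ p, F q p ∂(mu0.prod mu0) := by
    intro q
    rw [funext (hFr q), integral_const_mul, Qker_eq α t R hα0 hα1 hR, theta_eq, theta_eq, ← hc]
    push_cast
    ring
  have hsum := (hasSum_integral_of_summable_integral_norm hFint hFs).mul_left c
  have hnsum : Summable (fun p : ℕ × ℕ =>
      ‖(ThetaBin (a + 1) (p.1 + 1) : ℂ) * Qker α t R 1 1 ((p.1 : ℤ) + 1) ((p.2 : ℤ) + 1) *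
        (ThetaBin (b + 1) (p.2 + 1) : ℂ)‖) := by
    refine Summable.of_nonneg_of_le (fun _ => norm_nonneg _) (fun q => ?_) (hFs.mul_left ‖c‖)
    rw [hterm, norm_mul]
    gcongr
    exact norm_integral_le_integral_norm _
  refine ⟨hnsum, ?_⟩
  rw [← hnsum.of_norm.tsum_prod, tsum_congr hterm, hsum.tsum_eq, Qker_eq α t R hα0 hα1 hR, ← hc]
  congr 1
  refine integral_congr_ae (Filter.Eventually.of_forall fun p => ?_)
  simp only [hF]
  have hn1 : ∀ (k : ℕ) (θ : ℝ), Summable (fun n : ℕ => ‖(((n + k).choose k : ℕ) : ℂ) *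
      ((circleMap 0 R θ)⁻¹) ^ n‖) := by
    intro k θ
    simpa only [norm_mul, norm_pow, hnorm, Complex.norm_natCast] using hs k
  have hsm := summable_mul_of_summable_norm (hn1 a p.1) (hn1 b p.2)
  have hm := (hgeo a p.1).mul (hgeo b p.2) hsm
  have hm2 := (hm.mul_left (K p)).tsum_eq
  have e1 := HH_sum α t R hR (a + 1) p.1
  have e2 := HH_sum α t R hR (b + 1) p.2
  refine hm2.trans ?_
  rw [e1, e2, hK]
  beta_reduce
  generalize HH α t R 1 1 p.1 = X
  generalize HH α t R 1 1 p.2 = Y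
  generalize (1 / (1 - (circleMap 0 R p.1)⁻¹) ^ (a + 1)) = Z
  generalize (1 / (1 - (circleMap 0 R p.2)⁻¹) ^ (b + 1)) = T
  ring
end
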